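/- The class (a,b) ∈ π₁(T²) ≅ ℤ² can be represented by an embedding (injective continuous map) S¹ → T² if and only if gcd(a,b) = 1 or (a,b) = (0,0). -/

import Mathlib

/-- The standard loop on the torus representing the class `(a, b) ∈ π₁(T²) ≅ ℤ²`
(with the two factor circles as generators). -/
noncomputable def torusLoop (a b : ℤ) : C(Circle, Circle × Circle) :=
  ⟨fun z => (z ^ a, z ^ b), by fun_prop⟩

open unitInterval

/-- Along a path whose exponential, rotated by `c`, stays in the slit plane, the path differs
from a branch of the logarithm by a constant. -/
lemma sub_log_mul_exp_eq {c : ℂ} {γ : I → ℂ} (hγ : Continuous γ)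
    (h : ∀ u, c * Complex.exp (γ u) ∈ Complex.slitPlane) (u v : I) :
    γ u - Complex.log (c * Complex.exp (γ u)) = γ v - Complex.log (c * Complex.exp (γ v)) := by
  refine Complex.isCoveringMap_exp.const_of_comp
    (g := fun u ↦ γ u - Complex.log (c * Complex.exp (γ u))) ?_ ?_ u v
  · exact hγ.sub (Continuous.clog (by fun_prop) h)
  · have key (w : I) : Complex.exp (γ w - Complex.log (c * Complex.exp (γ w))) = c⁻¹ := by
      rw [Complex.exp_sub, Complex.exp_log (Complex.slitPlane_ne_zero (h w)), mul_comm,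
        div_mul_cancel_left₀ (Complex.exp_ne_zero _)]
    intro a b
    exact Subtype.ext ((key a).trans (key b).symm)

/-- If a path lies in the closed lower half plane minus the origin and leads from `-1` to a
positive real `r`, then every lift of it through `exp` increases by `log r + π * I`. -/
lemma lift_exp_sub_of_im_nonpos {γ : I → ℂ} (hγ : Continuous γ) {r : ℝ} (hr : 0 < r)
    (h : ∀ u, (Complex.exp (γ u)).im ≤ 0) (h₀ : Complex.exp (γ 0) = -1)
    (h₁ : Complex.exp (γ 1) = r) : γ 1 - γ 0 = Real.log r + Real.pi * Complex.I := by
  have hs (u : I) : Complex.I * Complex.exp (γ u) ∈ Complex.slitPlane := by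
    rw [Complex.mem_slitPlane_iff]
    rcases (h u).lt_or_eq with hu | hu
    · left; simpa using hu
    · right
      intro hre
      apply Complex.exp_ne_zero (γ u)
      apply Complex.ext
      · simpa using hre
      · simpa using hu
  have := sub_log_mul_exp_eq hγ hs 1 0
  rw [h₀, h₁, mul_comm, Complex.log_ofReal_mul hr Complex.I_ne_zero, mul_neg_one,
    Complex.log_I, Complex.log_neg_I] at this
  linear_combination this

/-- If a path lies in the closed upper half plane minus the origin and leads from `-1` to a
positive real `r`, then every lift of it through `exp` increases by `log r - π * I`. -/
lemma lift_exp_sub_of_im_nonneg {γ : I → ℂ} (hγ : Continuous γ) {r : ℝ} (hr : 0 < r)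
    (h : ∀ u, 0 ≤ (Complex.exp (γ u)).im) (h₀ : Complex.exp (γ 0) = -1)
    (h₁ : Complex.exp (γ 1) = r) : γ 1 - γ 0 = Real.log r - Real.pi * Complex.I := by
  have := lift_exp_sub_of_im_nonpos (γ := fun u ↦ (starRingEnd ℂ) (γ u))
    (Complex.continuous_conj.comp hγ) hr
    (fun u ↦ by simpa [Complex.exp_conj] using h u)
    (by simp [Complex.exp_conj, h₀]) (by simp [Complex.exp_conj, h₁])
  have := congrArg (starRingEnd ℂ) this
  simpa [sub_eq_add_neg] using this

/-- A plane curve which is invariant under the horizontal translation by `d > 1` has a horizontal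
chord of length one. -/
theorem exists_horizontal_unit_chord {x y : ℝ → ℝ} (hx : Continuous x) (hy : Continuous y)
    {T d : ℝ} (hT : 0 < T) (hd : 1 < d) (hxT : ∀ t, x (t + T) = x t + d)
    (hyT : Function.Periodic y T) : ∃ s t, x t - x s = 1 ∧ y t = y s := by
  by_contra! hne
  have hK : IsCompact (Set.range y) := hyT.compact_of_continuous hT.ne' hy
  obtain ⟨_, ⟨sM, rfl⟩, hM⟩ := hK.exists_isGreatest (Set.range_nonempty y)
  obtain ⟨_, ⟨sm, rfl⟩, hm⟩ := hK.exists_isLeast (Set.range_nonempty y)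
  let Φ : C(I × ℝ, {z : ℂ // z ≠ 0}) :=
    ⟨fun p ↦ ⟨⟨x (p.2 + p.1 * T) - x p.2 - 1, y (p.2 + p.1 * T) - y p.2⟩, fun h ↦ by
      have h1 := congrArg Complex.re h
      have h2 := congrArg Complex.im h
      simp only [Complex.zero_re, Complex.zero_im] at h1 h2
      exact hne p.2 (p.2 + p.1 * T) (by linarith) (by linarith)⟩, by
      refine Continuous.subtype_mk ?_ _
      refine Complex.equivRealProdCLM.symm.continuous.comp
        (f := fun p : I × ℝ ↦ (x (p.2 + p.1 * T) - x p.2 - 1, y (p.2 + p.1 * T) - y p.2)) ?_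
      fun_prop⟩
  have hΦ0 (s : ℝ) : (Φ (0, s) : ℂ) = -1 := by
    apply Complex.ext <;> simp [Φ]
  have hΦ1 (s : ℝ) : (Φ (1, s) : ℂ) = (d - 1 : ℝ) := by
    apply Complex.ext <;> simp [Φ, hxT, hyT s]
  have hstart (s : ℝ) : Φ (0, s) = (⟨_, (Real.pi * Complex.I : ℂ).exp_ne_zero⟩ :
      {z : ℂ // z ≠ 0}) := Subtype.ext ((hΦ0 s).trans Complex.exp_pi_mul_I.symm)
  let L := Complex.isCoveringMap_exp.liftHomotopy Φ (.const ℝ (Real.pi * Complex.I)) hstart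
  have hL (p : I × ℝ) : Complex.exp (L p) = Φ p :=
    congrArg Subtype.val
      (congrFun (Complex.isCoveringMap_exp.liftHomotopy_lifts Φ _ hstart) p)
  have hL0 (s : ℝ) : L (0, s) = Real.pi * Complex.I :=
    Complex.isCoveringMap_exp.liftHomotopy_zero Φ _ hstart s
  have hL1 : L (1, sM) = L (1, sm) :=
    Complex.isCoveringMap_exp.const_of_comp (g := fun s : ℝ ↦ L (1, s)) (by fun_prop)
      (fun a b ↦ Subtype.ext (by simp only [hL, hΦ1])) sM sm
  have hup := lift_exp_sub_of_im_nonpos (γ := fun u ↦ L (u, sM)) (by fun_prop) (sub_pos.2 hd)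
    (fun u ↦ by rw [hL]; exact sub_nonpos.2 (hM ⟨_, rfl⟩)) (by rw [hL, hΦ0]) (by rw [hL, hΦ1])
  have hdown := lift_exp_sub_of_im_nonneg (γ := fun u ↦ L (u, sm)) (by fun_prop) (sub_pos.2 hd)
    (fun u ↦ by rw [hL]; exact sub_nonneg.2 (hm ⟨_, rfl⟩)) (by rw [hL, hΦ0]) (by rw [hL, hΦ1])
  simp only [hL0, hL1] at hup hdown
  have := congrArg Complex.im (hup.symm.trans hdown)
  simp only [Complex.add_im, Complex.sub_im, Complex.ofReal_im, Complex.mul_im, Complex.ofReal_re,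
    Complex.I_im, Complex.I_re] at this
  linarith [Real.pi_pos]

/-- A self-map of the circle homotopic to `z ↦ z ^ a` lifts to a real function which increases
by `2 * π * a` over each period. -/
lemma exists_real_lift_of_homotopic_zpow {a : ℤ} {f g : C(Circle, Circle)}
    (h : f.Homotopic g) (hg : ∀ z, g z = z ^ a) :
    ∃ F : ℝ → ℝ, Continuous F ∧ (∀ t, Circle.exp (F t) = f (Circle.exp t)) ∧
      ∀ t, F (t + 2 * Real.pi) = F t + 2 * Real.pi * a := by
  obtain ⟨H⟩ := h.symm
  let K : C(I × Circle, Circle) := ⟨fun p ↦ H p * (p.2 ^ a)⁻¹, by fun_prop⟩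
  have hK (z : Circle) : K (0, z) = Circle.exp (ContinuousMap.const Circle (0 : ℝ) z) := by
    simp [K, hg]
  let φ := Circle.isCoveringMap_exp.liftHomotopy K _ hK
  have hφ (z : Circle) : Circle.exp (φ (1, z)) = f z * (z ^ a)⁻¹ := by
    have := congrFun (Circle.isCoveringMap_exp.liftHomotopy_lifts K _ hK) (1, z)
    rw [Function.comp_apply] at this
    exact this.trans (by simp [K])
  refine ⟨fun t ↦ φ (1, Circle.exp t) + a * t, by fun_prop, fun t ↦ ?_, fun t ↦ ?_⟩
  · rw [Circle.exp_add, hφ, ← zsmul_eq_mul, Circle.exp_zsmul, inv_mul_cancel_right]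
  · simp only [Circle.exp_add_two_pi]
    ring

/-- The gcd of the coordinates of the class of an injective loop on the torus is at most one. -/
theorem gcd_le_one_of_injective_of_homotopic {a b : ℤ} {f : C(Circle, Circle × Circle)}
    (hf : Function.Injective f) (h : f.Homotopic (torusLoop a b)) : Int.gcd a b ≤ 1 := by
  by_contra! hd
  obtain ⟨F, hF, hFf, hFa⟩ := exists_real_lift_of_homotopic_zpow
    ((ContinuousMap.Homotopic.refl ⟨Prod.fst, continuous_fst⟩).comp h) (a := a) fun _ ↦ rfl
  obtain ⟨G, hG, hGf, hGb⟩ := exists_real_lift_of_homotopic_zpow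
    ((ContinuousMap.Homotopic.refl ⟨Prod.snd, continuous_snd⟩).comp h) (a := b) fun _ ↦ rfl
  obtain ⟨p, hp⟩ := Int.gcd_dvd_left (a := a) (b := b)
  obtain ⟨q, hq⟩ := Int.gcd_dvd_right (a := a) (b := b)
  have hbez := Int.gcd_eq_gcd_ab a b
  set u := Int.gcdA a b
  set v := Int.gcdB a b
  set d := Int.gcd a b
  have hd0 : (d : ℤ) ≠ 0 := by omega
  have huv : p * u + q * v = 1 := by
    apply mul_left_cancel₀ hd0
    linear_combination -hbez - u * hp - v * hq
  have hpR : (a : ℝ) = d * p := by exact_mod_cast hp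
  have hqR : (b : ℝ) = d * q := by exact_mod_cast hq
  have huvR : (p * u + q * v : ℝ) = 1 := by exact_mod_cast huv
  have hpi : 2 * Real.pi ≠ 0 := by positivity
  have hxT (t : ℝ) : (u * F (t + 2 * Real.pi) + v * G (t + 2 * Real.pi)) / (2 * Real.pi) =
      (u * F t + v * G t) / (2 * Real.pi) + d := by
    rw [hFa, hGb, hpR, hqR]
    field_simp
    linear_combination 2 * Real.pi * d * huvR
  obtain ⟨s, t, hst, hst'⟩ := exists_horizontal_unit_chord
    (x := fun t ↦ (u * F t + v * G t) / (2 * Real.pi)) (y := fun t ↦ q * F t - p * G t)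
    (by fun_prop) (by fun_prop) Real.two_pi_pos (d := d) (by exact_mod_cast hd) hxT
    (fun t ↦ by simp only [hFa, hGb, hpR, hqR]; ring)
  have hst₁ : u * (F t - F s) + v * (G t - G s) = 2 * Real.pi := by
    field_simp at hst
    linarith
  have hFst : F t = F s + p * (2 * Real.pi) := by
    linear_combination p * hst₁ + v * hst' - (F t - F s) * huvR
  have hGst : G t = G s + q * (2 * Real.pi) := by
    linear_combination q * hst₁ - u * hst' - (G t - G s) * huvR
  have hexp : Circle.exp t = Circle.exp s := hf <| Prod.ext
    ((hFf t).symm.trans ((Circle.exp_eq_exp.2 ⟨p, hFst⟩).trans (hFf s)))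
    ((hGf t).symm.trans ((Circle.exp_eq_exp.2 ⟨q, hGst⟩).trans (hGf s)))
  obtain ⟨n, hn⟩ := Circle.exp_eq_exp.1 hexp
  have hper : Function.Periodic
      (fun t ↦ (u * F t + v * G t) / (2 * Real.pi) - d * (t / (2 * Real.pi))) (2 * Real.pi) := by
    intro t
    simp only [hxT]
    field_simp
    ring
  have hn' := hper.int_mul n s
  simp only [← hn] at hn'
  have hdn : (d : ℝ) * n = 1 := by
    have : d * (t / (2 * Real.pi)) = d * (s / (2 * Real.pi)) + d * n := by
      rw [hn]
      field_simp
    linarith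
  have hdn' : (d : ℤ) * n = 1 := by exact_mod_cast hdn
  have := Int.eq_one_or_neg_one_of_mul_eq_one hdn'
  omega

/-- The standard loop of a primitive class is injective. -/
lemma torusLoop_injective {a b : ℤ} (h : Int.gcd a b = 1) :
    Function.Injective (torusLoop a b) := by
  have hbez := Int.gcd_eq_gcd_ab a b
  rw [h, Nat.cast_one] at hbez
  have key (z : Circle) : z = (z ^ a) ^ Int.gcdA a b * (z ^ b) ^ Int.gcdB a b := by
    rw [← zpow_mul, ← zpow_mul, ← zpow_add, ← hbez, zpow_one]
  intro z w hzw
  have h₁ : z ^ a = w ^ a := congrArg Prod.fst hzw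
  have h₂ : z ^ b = w ^ b := congrArg Prod.snd hzw
  rw [key z, key w, h₁, h₂]

/-- The trivial class is represented by an injective loop. -/
lemma exists_injective_homotopic_torusLoop_zero :
    ∃ f : C(Circle, Circle × Circle), Function.Injective f ∧ f.Homotopic (torusLoop 0 0) := by
  have hmem (r : ℝ) (h : |r| ≤ 1) : r ∈ Set.Icc (-1 : ℝ) 1 := abs_le.1 h
  have hinj : Set.InjOn Circle.exp (Set.Icc (-1 : ℝ) 1) :=
    Circle.exp_injOn_Icc (by linarith [Real.pi_gt_three])
  refine ⟨⟨fun z ↦ (Circle.exp (z : ℂ).re, Circle.exp (z : ℂ).im), by fun_prop⟩, ?_, ⟨?_⟩⟩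
  · intro z w hzw
    refine Circle.ext (Complex.ext ?_ ?_)
    · refine hinj (hmem _ ?_) (hmem _ ?_) (congrArg Prod.fst hzw)
      · exact (Complex.abs_re_le_norm _).trans z.norm_coe.le
      · exact (Complex.abs_re_le_norm _).trans w.norm_coe.le
    · refine hinj (hmem _ ?_) (hmem _ ?_) (congrArg Prod.snd hzw)
      · exact (Complex.abs_im_le_norm _).trans z.norm_coe.le
      · exact (Complex.abs_im_le_norm _).trans w.norm_coe.le
  · exact
      { toFun := fun p ↦ (Circle.exp ((1 - p.1) * (p.2 : ℂ).re),
          Circle.exp ((1 - p.1) * (p.2 : ℂ).im))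
        continuous_toFun := by fun_prop
        map_zero_left := fun z ↦ by simp
        map_one_left := fun z ↦ by simp [torusLoop] }

/-- The class `(a,b) ∈ π₁(T²) ≅ ℤ²` is represented by an embedding
(an injective continuous loop, i.e. an injective continuous map freely homotopic to the
standard `(a,b)`-loop) if and only if `gcd(a,b) = 1` or `(a,b) = (0,0)`. -/
theorem stmt4 (a b : ℤ) :
    (∃ f : C(Circle, Circle × Circle), Function.Injective f ∧
      ContinuousMap.Homotopic f (torusLoop a b)) ↔
      (Int.gcd a b = 1 ∨ (a = 0 ∧ b = 0)) := by
  constructor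
  · rintro ⟨f, hf, h⟩
    have := gcd_le_one_of_injective_of_homotopic hf h
    rw [← Int.gcd_eq_zero_iff]
    omega
  · rintro (h | ⟨rfl, rfl⟩)
    · exact ⟨torusLoop a b, torusLoop_injective h, .refl _⟩
    · exact exists_injective_homotopic_torusLoop_zero
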